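/- A function f : (k+1)^E → ℝ is k-submodular if and only if f is both orthant submodular and pairwise monotone. -/

import Mathlib

/-- The support of `p : E → Fin (k+1)`: elements assigned a nonzero label. -/
def kSupp {E : Type*} [Fintype E] [DecidableEq E] {k : ℕ}
    (p : E → Fin (k+1)) : Finset E :=
  Finset.univ.filter (fun e => p e ≠ 0)

/-- The meet `p ⊓ q`. -/
def kInf {E : Type*} {k : ℕ} (p q : E → Fin (k+1)) : E → Fin (k+1) :=
  fun e => if p e = q e then p e else 0

/-- The join `p ⊔ q`. -/
def kSup {E : Type*} {k : ℕ} (p q : E → Fin (k+1)) : E → Fin (k+1) :=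
  fun e => if q e = 0 ∨ q e = p e then p e else if p e = 0 then q e else 0

/-- `f` is `k`-submodular. -/
def IsKSubmodular {E : Type*} {k : ℕ} (f : (E → Fin (k+1)) → ℝ) : Prop :=
  ∀ p q, f (kSup p q) + f (kInf p q) ≤ f p + f q

/-- The partial order `p ⪯ q`. -/
def kLE {E : Type*} {k : ℕ} (p q : E → Fin (k+1)) : Prop :=
  ∀ e, p e ≠ 0 → p e = q e

/-- Marginal gain `Δ_{e,i} f(p) = f(p + i·1_e) − f(p)`. -/
def marg {E : Type*} [DecidableEq E] {k : ℕ}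
    (f : (E → Fin (k+1)) → ℝ) (p : E → Fin (k+1)) (e : E) (i : Fin (k+1)) : ℝ :=
  f (Function.update p e i) - f p

/-- Orthant submodularity. -/
def OrthantSubmodular {E : Type*} [DecidableEq E] {k : ℕ}
    (f : (E → Fin (k+1)) → ℝ) : Prop :=
  ∀ (p q : E → Fin (k+1)) (e : E) (i : Fin (k+1)),
    kLE p q → q e = 0 → i ≠ 0 → marg f q e i ≤ marg f p e i

/-- Pairwise monotonicity. -/
def PairwiseMonotone {E : Type*} [DecidableEq E] {k : ℕ}
    (f : (E → Fin (k+1)) → ℝ) : Prop :=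
  ∀ (p : E → Fin (k+1)) (e : E) (i j : Fin (k+1)),
    p e = 0 → i ≠ 0 → j ≠ 0 → i ≠ j → 0 ≤ marg f p e i + marg f p e j

/-- Monotonicity of `f` with respect to `⪯`. -/
def KMonotone {E : Type*} {k : ℕ} (f : (E → Fin (k+1)) → ℝ) : Prop :=
  ∀ p q, kLE p q → f p ≤ f q

/-!
For the harder implication, write `s = p ⊔ q`. Orthant submodularity gives the `k`-submodular
inequality for any two assignments that never conflict, in particular for `(p, s)`, `(q, s)` and
`(p ⊓ s, q ⊓ s)`; the last pair has join `s` and meet `p ⊓ q`. The assignments `p ⊔ s` and `q ⊔ s`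
have the same support and meet `s`; for such a pair the two hypotheses together yield
`2 f(s) ≤ f(p ⊔ s) + f(q ⊔ s)`. The four inequalities add up to the `k`-submodular inequality for
`(p, q)`.
-/

open Function

section Assignments

variable {E : Type*} {k : ℕ} {p q r : E → Fin (k + 1)} {e : E} {i j : Fin (k + 1)}

/-- Two assignments are compatible if no element receives distinct nonzero labels from them, that
is, if they lie in a common orthant. These are the pairs on which orthant submodularity alone
implies the `k`-submodular inequality. -/
def KCompatible (p q : E → Fin (k + 1)) : Prop :=
  ∀ e, p e ≠ 0 → q e ≠ 0 → p e = q e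

theorem kCompatible_of_kLE (hp : kLE p r) (hq : kLE q r) : KCompatible p q :=
  fun e hpe hqe => (hp e hpe).trans (hq e hqe).symm

theorem kCompatible_kSup_left (p q : E → Fin (k + 1)) : KCompatible p (kSup p q) := by
  grind [KCompatible, kSup]

theorem kCompatible_kSup_right (p q : E → Fin (k + 1)) : KCompatible q (kSup p q) := by
  grind [KCompatible, kSup]

theorem kInf_kLE_right (p q : E → Fin (k + 1)) : kLE (kInf p q) q := by
  grind [kLE, kInf]

theorem kSup_kInf_kSup (p q : E → Fin (k + 1)) :
    kSup (kInf p (kSup p q)) (kInf q (kSup p q)) = kSup p q := by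
  ext1 e
  grind [kSup, kInf]

theorem kInf_kInf_kSup (p q : E → Fin (k + 1)) :
    kInf (kInf p (kSup p q)) (kInf q (kSup p q)) = kInf p q := by
  ext1 e
  grind [kSup, kInf]

theorem kInf_kSup_kSup (p q : E → Fin (k + 1)) :
    kInf (kSup p (kSup p q)) (kSup q (kSup p q)) = kSup p q := by
  ext1 e
  grind [kSup, kInf]

variable [DecidableEq E] {T : Finset E}

theorem kSupp_kSup_kSup [Fintype E] (p q : E → Fin (k + 1)) :
    kSupp (kSup p (kSup p q)) = kSupp (kSup q (kSup p q)) := by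
  ext e
  grind [kSupp, kSup]

theorem kSup_update_of_kLE (hpq : kLE p q) (hq : q e = 0) :
    kSup (update p e i) q = update q e i := by
  ext1 x
  grind [kSup, kLE, update_apply]

theorem kInf_update_of_kLE (hpq : kLE p q) (hq : q e = 0) :
    kInf (update p e i) q = p := by
  ext1 x
  grind [kInf, kLE, update_apply]

theorem kSup_update_update (hp : p e = 0) (hi : i ≠ 0) (hj : j ≠ 0) (hij : i ≠ j) :
    kSup (update p e i) (update p e j) = p := by
  ext1 x
  grind [kSup, update_apply]

theorem kInf_update_update (hp : p e = 0) (hij : i ≠ j) :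
    kInf (update p e i) (update p e j) = p := by
  ext1 x
  grind [kInf, update_apply]

theorem kLE.piecewise (hpq : kLE p q) (T : Finset E) (a : E → Fin (k + 1)) :
    kLE (T.piecewise a p) (T.piecewise a q) := by
  grind [kLE, Finset.piecewise]

theorem kLE_piecewise_of_eq_zero (hp : ∀ e ∈ T, p e = 0) (a : E → Fin (k + 1)) :
    kLE p (T.piecewise a p) := by
  grind [kLE, Finset.piecewise]

end Assignments

section Functions

variable {E : Type*} [DecidableEq E] {k : ℕ} {f : (E → Fin (k + 1)) → ℝ}
  {p q : E → Fin (k + 1)}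

theorem IsKSubmodular.orthantSubmodular (hf : IsKSubmodular f) : OrthantSubmodular f := by
  intro p q e i hpq hq _
  have h := hf (update p e i) q
  rw [kSup_update_of_kLE hpq hq, kInf_update_of_kLE hpq hq] at h
  unfold marg
  linarith

theorem IsKSubmodular.pairwiseMonotone (hf : IsKSubmodular f) : PairwiseMonotone f := by
  intro p e i j hp hi hj hij
  have h := hf (update p e i) (update p e j)
  rw [kSup_update_update hp hi hj hij, kInf_update_update hp hij] at h
  unfold marg
  linarith

theorem OrthantSubmodular.piecewise_sub_le (hf : OrthantSubmodular f) (hpq : kLE p q)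
    {a : E → Fin (k + 1)} {T : Finset E} (hq : ∀ e ∈ T, q e = 0) (ha : ∀ e ∈ T, a e ≠ 0) :
    f (T.piecewise a q) - f q ≤ f (T.piecewise a p) - f p := by
  induction T using Finset.induction_on with
  | empty => simp
  | insert e T he ih =>
    rw [Finset.forall_mem_insert] at hq ha
    have gain_e : marg f (T.piecewise a q) e (a e) ≤ marg f (T.piecewise a p) e (a e) :=
      hf _ _ e (a e) (hpq.piecewise T a) (by simp [he, hq.1]) ha.1
    have gain_T := ih hq.2 ha.2
    rw [Finset.piecewise_insert, Finset.piecewise_insert]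
    unfold marg at gain_e
    linarith

theorem OrthantSubmodular.kSup_add_kInf_le [Finite E] (hf : OrthantSubmodular f)
    (hpq : KCompatible p q) : f (kSup p q) + f (kInf p q) ≤ f p + f q := by
  have := Fintype.ofFinite E
  let T : Finset E := {e | p e ≠ 0 ∧ q e = 0}
  have hsup : T.piecewise p q = kSup p q := by
    ext1 e
    grind [KCompatible, kSup, Finset.piecewise]
  have hinf : T.piecewise p (kInf p q) = p := by
    ext1 e
    grind [KCompatible, kInf, Finset.piecewise]
  have h := hf.piecewise_sub_le (kInf_kLE_right p q) (a := p) (T := T)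
    (by simp [T]) (by simp +contextual [T])
  rw [hsup, hinf] at h
  linarith

theorem PairwiseMonotone.two_mul_le_piecewise_add (hf : PairwiseMonotone f)
    (hf' : OrthantSubmodular f) {a b : E → Fin (k + 1)} {T : Finset E} (hp : ∀ e ∈ T, p e = 0)
    (ha : ∀ e ∈ T, a e ≠ 0) (hb : ∀ e ∈ T, b e ≠ 0) (hab : ∀ e ∈ T, a e ≠ b e) :
    2 * f p ≤ f (T.piecewise a p) + f (T.piecewise b p) := by
  induction T using Finset.induction_on generalizing p with
  | empty => simp [two_mul]
  | insert e T he ih =>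
    rw [Finset.forall_mem_insert] at hp ha hb hab
    have hmono : 0 ≤ marg f (T.piecewise a p) e (a e) + marg f (T.piecewise a p) e (b e) :=
      hf _ e _ _ (by simp [he, hp.1]) ha.1 hb.1 hab.1
    have horth : marg f (T.piecewise a p) e (b e) ≤ marg f p e (b e) :=
      hf' _ _ e _ (kLE_piecewise_of_eq_zero hp.2 a) (by simp [he, hp.1]) hb.1
    -- Giving `e` the label `b e` in all assignments leaves only the labels in `T` in conflict.
    have hupdate := ih (p := update p e (b e))
      (fun x hx => by rw [update_of_ne (ne_of_mem_of_not_mem hx he), hp.2 x hx]) ha.2 hb.2 hab.2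
    rw [← Finset.update_piecewise_of_notMem _ _ _ he,
      ← Finset.update_piecewise_of_notMem _ _ _ he] at hupdate
    rw [Finset.piecewise_insert, Finset.piecewise_insert]
    unfold marg at hmono horth
    linarith

theorem PairwiseMonotone.two_mul_kInf_le [Fintype E] (hf : PairwiseMonotone f)
    (hf' : OrthantSubmodular f) (hpq : kSupp p = kSupp q) :
    2 * f (kInf p q) ≤ f p + f q := by
  let T : Finset E := {e | p e ≠ q e}
  have hzero (e : E) : p e = 0 ↔ q e = 0 := by
    simpa [kSupp, not_iff_not] using Finset.ext_iff.mp hpq e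
  have hpT : T.piecewise p (kInf p q) = p := by
    ext1 e
    grind [kInf, Finset.piecewise]
  have hqT : T.piecewise q (kInf p q) = q := by
    ext1 e
    grind [kInf, Finset.piecewise]
  have h := hf.two_mul_le_piecewise_add hf' (p := kInf p q) (a := p) (b := q) (T := T)
    (by grind [kInf]) (by grind) (by grind) (by grind)
  rwa [hpT, hqT] at h

theorem OrthantSubmodular.isKSubmodular [Finite E] (hf : OrthantSubmodular f)
    (hf' : PairwiseMonotone f) : IsKSubmodular f := by
  intro p q
  have := Fintype.ofFinite E
  set s := kSup p q
  have hps : f (kSup p s) + f (kInf p s) ≤ f p + f s :=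
    hf.kSup_add_kInf_le (kCompatible_kSup_left p q)
  have hqs : f (kSup q s) + f (kInf q s) ≤ f q + f s :=
    hf.kSup_add_kInf_le (kCompatible_kSup_right p q)
  have hmeets : f s + f (kInf p q) ≤ f (kInf p s) + f (kInf q s) := by
    have h := hf.kSup_add_kInf_le
      (kCompatible_of_kLE (kInf_kLE_right p s) (kInf_kLE_right q s))
    rwa [kSup_kInf_kSup, kInf_kInf_kSup] at h
  have hjoins : 2 * f s ≤ f (kSup p s) + f (kSup q s) := by
    have h := hf'.two_mul_kInf_le hf (kSupp_kSup_kSup p q)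
    rwa [kInf_kSup_kSup] at h
  linarith

end Functions

/-- `f` is `k`-submodular iff it is orthant submodular and pairwise monotone. -/
theorem kSubmodular_iff_orthant_and_pairwise
    {E : Type*} [Fintype E] [DecidableEq E] {k : ℕ} (hk : 1 ≤ k)
    (f : (E → Fin (k+1)) → ℝ) :
    IsKSubmodular f ↔ OrthantSubmodular f ∧ PairwiseMonotone f := by
  exact ⟨fun hf => ⟨hf.orthantSubmodular, hf.pairwiseMonotone⟩,
    fun ⟨horth, hmono⟩ => horth.isKSubmodular hmono⟩
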